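/- Generalized Łoś–Tarski theorem GLT(k), extension-closed direction: let τ be a finite first-order vocabulary, V an FO(τ) theory, φ an FO(τ) sentence, and k a natural number. Then φ is k-extension closed modulo V if and only if φ is equivalent modulo V to a ∀^k∃* sentence, i.e., a prenex sentence of the form ∀x₁…∀x_k ∃y₁…∃y_n ψ for some n, with ψ quantifier-free. (All structures here are arbitrary, possibly infinite.) -/

import Mathlib

open FirstOrder Language

universe u v w

namespace GLTPaper

variable {L : FirstOrder.Language.{u, v}}

/-- Existentially quantify over the last `n` free (de Bruijn) variables of a bounded formula,
leaving the first `k` variables free. -/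
def exsFrom (k : ℕ) : ∀ {n : ℕ}, L.BoundedFormula Empty (k + n) → L.BoundedFormula Empty k
  | 0, ψ => ψ
  | _ + 1, ψ => exsFrom k ψ.ex

/-- The `∀^k∃*` sentence `∀x₁…∀x_k ∃y₁…∃y_n ψ` built from a quantifier-free matrix `ψ`. -/
def forallExistsSentence (k n : ℕ) (ψ : L.BoundedFormula Empty (k + n)) : L.Sentence :=
  (exsFrom k ψ).alls

/-- A `k`-ary cover of a structure `M` is a nonempty collection of (nonempty) substructures
of `M` such that every set of at most `k` elements of `M` is contained in some member. -/
def IsKAryCover (k : ℕ) {M : Type w} [L.Structure M] (R : Set (L.Substructure M)) : Prop :=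
  R.Nonempty ∧ (∀ N ∈ R, (N : Set M).Nonempty) ∧
    ∀ C : Finset M, C.card ≤ k → ∃ N ∈ R, (C : Set M) ⊆ (N : Set M)

/-- A sentence `φ` is `k`-extension closed modulo a theory `V` if every (nonempty) model `M`
of `V` admitting a `k`-ary cover all of whose members satisfy `V ∪ {φ}` itself satisfies `φ`. -/
def KExtensionClosed (V : L.Theory) (k : ℕ) (φ : L.Sentence) : Prop :=
  ∀ (M : Type w) [L.Structure M] [Nonempty M], M ⊨ V →
    ∀ R : Set (L.Substructure M), IsKAryCover k R →
      (∀ N ∈ R, (N : Type w) ⊨ V ∧ (N : Type w) ⊨ φ) → M ⊨ φ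

open Filter in
/-- Compactness for countable sets of formulas, staying in a fixed universe. -/
theorem compactness_countable {α : Type*} (S : Set (L.Formula α)) (hS : S.Countable)
    (h : ∀ F : Finset (L.Formula α), (F : Set (L.Formula α)) ⊆ S →
      ∃ (M : Type w) (_ : L.Structure M) (_ : Nonempty M) (x : α → M), ∀ θ ∈ F, θ.Realize x) :
    ∃ (M : Type w) (_ : L.Structure M) (_ : Nonempty M) (x : α → M), ∀ θ ∈ S, θ.Realize x := by
  classical
  rcases S.eq_empty_or_nonempty with rfl | hne
  · obtain ⟨M, i1, i2, x, -⟩ := h ∅ (by simp)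
    exact ⟨M, i1, i2, x, by simp⟩
  obtain ⟨t, rfl⟩ := hS.exists_eq_range hne
  have h' : ∀ n : ℕ, ∃ (M : Type w) (_ : L.Structure M) (_ : Nonempty M) (x : α → M),
      ∀ j ≤ n, (t j).Realize x := by
    intro n
    obtain ⟨M, i1, i2, x, hx⟩ := h ((Finset.range (n + 1)).image t) (by
      intro y hy
      simp only [Finset.coe_image, Set.mem_image] at hy
      obtain ⟨j, -, rfl⟩ := hy
      exact ⟨j, rfl⟩)
    exact ⟨M, i1, i2, x, fun j hj => hx _ (Finset.mem_image.2 ⟨j, by simp; omega, rfl⟩)⟩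
  choose M i1 i2 x hx using h'
  refine ⟨((hyperfilter ℕ : Ultrafilter ℕ) : Filter ℕ).Product M, inferInstance, inferInstance,
    fun a => ((fun n => x n a : ∀ n, M n) : ((hyperfilter ℕ : Ultrafilter ℕ) : Filter ℕ).Product M),
    ?_⟩
  rintro _ ⟨j, rfl⟩
  refine (Ultraproduct.realize_formula_cast (t j) (fun a n => x n a)).2 ?_
  have : ∀ᶠ n : ℕ in (hyperfilter ℕ : Filter ℕ), j ≤ n :=
    Nat.hyperfilter_le_atTop (eventually_ge_atTop j)
  filter_upwards [this] with n hn using hx n j hn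

open Filter in
/-- Countable saturation of ultrapowers along a nonprincipal ultrafilter on `ℕ`. -/
theorem saturation {α β : Type*} (M : Type w) [L.Structure M] [Nonempty M]
    (a : α → ((hyperfilter ℕ : Ultrafilter ℕ) : Filter ℕ).Product (fun _ => M))
    (S : Set (L.Formula (α ⊕ β))) (hS : S.Countable)
    (h : ∀ F : Finset (L.Formula (α ⊕ β)), (F : Set (L.Formula (α ⊕ β))) ⊆ S →
      ∃ c : β → ((hyperfilter ℕ : Ultrafilter ℕ) : Filter ℕ).Product (fun _ => M),
        ∀ θ ∈ F, θ.Realize (Sum.elim a c)) :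
    ∃ c : β → ((hyperfilter ℕ : Ultrafilter ℕ) : Filter ℕ).Product (fun _ => M),
        ∀ θ ∈ S, θ.Realize (Sum.elim a c) := by
  classical
  rcases S.eq_empty_or_nonempty with rfl | hne
  · obtain ⟨c, -⟩ := h ∅ (by simp)
    exact ⟨c, by simp⟩
  obtain ⟨t, rfl⟩ := hS.exists_eq_range hne
  have ha : ∃ a' : α → ℕ → M, a = fun i => ((a' i : ℕ → M) :
      ((hyperfilter ℕ : Ultrafilter ℕ) : Filter ℕ).Product (fun _ => M)) :=
    ⟨fun i => Quotient.out (a i), funext fun i => (Quotient.out_eq (a i)).symm⟩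
  obtain ⟨a', rfl⟩ := ha
  have key : ∀ (c' : β → ℕ → M) (θ : L.Formula (α ⊕ β)),
      θ.Realize (Sum.elim (fun i => ((a' i : ℕ → M) :
        ((hyperfilter ℕ : Ultrafilter ℕ) : Filter ℕ).Product (fun _ => M)))
        (fun i => ((c' i : ℕ → M) :
        ((hyperfilter ℕ : Ultrafilter ℕ) : Filter ℕ).Product (fun _ => M)))) ↔
      ∀ᶠ n in (hyperfilter ℕ : Filter ℕ),
        θ.Realize (Sum.elim (fun i => a' i n) (fun i => c' i n)) := by
    intro c' θ
    have := Ultraproduct.realize_formula_cast (u := hyperfilter ℕ) (M := fun _ : ℕ => M) θ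
      (Sum.elim a' c')
    convert! this using 2
    · ext (i | i) <;> rfl
    · ext n
      apply iff_of_eq
      congr 1
      ext (i | i) <;> rfl
  have hX : ∀ n : ℕ, ∀ᶠ i in (hyperfilter ℕ : Filter ℕ), ∃ c : β → M,
      ∀ j ≤ n, (t j).Realize (Sum.elim (fun l => a' l i) c) := by
    intro n
    obtain ⟨c, hc⟩ := h ((Finset.range (n + 1)).image t) (by
      intro y hy
      simp only [Finset.coe_image, Set.mem_image] at hy
      obtain ⟨j, -, rfl⟩ := hy
      exact ⟨j, rfl⟩)
    have hc' : ∃ c' : β → ℕ → M, c = fun i => ((c' i : ℕ → M) :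
        ((hyperfilter ℕ : Ultrafilter ℕ) : Filter ℕ).Product (fun _ => M)) :=
      ⟨fun i => Quotient.out (c i), funext fun i => (Quotient.out_eq (c i)).symm⟩
    obtain ⟨c', rfl⟩ := hc'
    have : ∀ᶠ i in (hyperfilter ℕ : Filter ℕ), ∀ θ ∈ (Finset.range (n + 1)).image t,
        θ.Realize (Sum.elim (fun l => a' l i) (fun l => c' l i)) := by
      rw [Filter.eventually_all_finset]
      intro θ hθ
      exact (key c' θ).1 (hc θ hθ)
    filter_upwards [this] with i hi
    exact ⟨fun l => c' l i, fun j hj => hi _ (Finset.mem_image.2 ⟨j, by simp; omega, rfl⟩)⟩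
  have hch : ∀ i : ℕ, ∃ c : β → M, ∀ n ≤ i,
      (∃ c : β → M, ∀ j ≤ n, (t j).Realize (Sum.elim (fun l => a' l i) c)) →
      ∀ j ≤ n, (t j).Realize (Sum.elim (fun l => a' l i) c) := by
    intro i
    have : ∀ N : ℕ, ∃ c : β → M, ∀ n ≤ N,
      (∃ c : β → M, ∀ j ≤ n, (t j).Realize (Sum.elim (fun l => a' l i) c)) →
      ∀ j ≤ n, (t j).Realize (Sum.elim (fun l => a' l i) c) := by
      intro N
      induction N with
      | zero =>
        by_cases hx : (∃ c : β → M, ∀ j ≤ 0, (t j).Realize (Sum.elim (fun l => a' l i) c))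
        · obtain ⟨c, hc⟩ := hx
          exact ⟨c, fun n hn _ j hj => hc j (by omega)⟩
        · refine ⟨fun _ => Classical.arbitrary M, fun n hn hx' => ?_⟩
          obtain rfl : n = 0 := by omega
          exact absurd hx' hx
      | succ N ih =>
        by_cases hx : (∃ c : β → M, ∀ j ≤ N + 1, (t j).Realize (Sum.elim (fun l => a' l i) c))
        · obtain ⟨c, hc⟩ := hx
          exact ⟨c, fun n hn _ j hj => hc j (by omega)⟩
        · obtain ⟨c, hc⟩ := ih
          refine ⟨c, fun n hn hx' => ?_⟩
          rcases Nat.lt_or_ge n (N + 1) with h1 | h1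
          · exact hc n (by omega) hx'
          · obtain rfl : n = N + 1 := by omega
            exact absurd hx' hx
    exact this i
  choose c hc using hch
  refine ⟨fun l => ((fun i => c i l : ℕ → M) :
        ((hyperfilter ℕ : Ultrafilter ℕ) : Filter ℕ).Product (fun _ => M)), ?_⟩
  rintro _ ⟨n, rfl⟩
  refine (key (fun l i => c i l) _).2 ?_
  have : ∀ᶠ i : ℕ in (hyperfilter ℕ : Filter ℕ), n ≤ i :=
    Nat.hyperfilter_le_atTop (eventually_ge_atTop n)
  filter_upwards [this, hX n] with i hi hx using hc i n hi hx n le_rfl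

theorem realize_exsFrom (k : ℕ) {n : ℕ} (ψ : L.BoundedFormula Empty (k + n)) {M : Type w}
    [L.Structure M] (v : Empty → M) (a : Fin k → M) :
    (exsFrom k ψ).Realize v a ↔ ∃ y : Fin n → M, ψ.Realize v (Fin.append a y) := by
  induction n with
  | zero =>
    simp only [exsFrom]
    constructor
    · intro h
      refine ⟨Fin.elim0, ?_⟩
      rw [Fin.append_elim0]
      exact h
    · rintro ⟨y, h⟩
      rw [Subsingleton.elim y Fin.elim0, Fin.append_elim0] at h
      exact h
  | succ n ih =>
    simp only [exsFrom]
    rw [ih]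
    simp only [BoundedFormula.realize_ex]
    constructor
    · rintro ⟨y, z, h⟩
      refine ⟨Fin.snoc y z, ?_⟩
      rw [Fin.append_snoc]
      exact h
    · rintro ⟨y, h⟩
      refine ⟨Fin.init y, y (Fin.last n), ?_⟩
      have := Fin.append_snoc a (Fin.init y) (y (Fin.last n))
      rw [Fin.snoc_init_self] at this
      rw [← this]
      exact h

theorem isQF_realize_embedding {α : Type*} {n : ℕ} {ψ : L.BoundedFormula α n} (h : ψ.IsQF)
    {M N : Type*} [L.Structure M] [L.Structure N] (f : M ↪[L] N) (v : α → M) (x : Fin n → M) :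
    ψ.Realize (f ∘ v) (f ∘ x) ↔ ψ.Realize v x := by
  induction h with
  | falsum => rfl
  | of_isAtomic h =>
    cases h with
    | equal t₁ t₂ =>
      simp only [BoundedFormula.realize_bdEqual, ← Sum.comp_elim, HomClass.realize_term]
      exact f.injective.eq_iff
    | rel R ts =>
      simp only [BoundedFormula.realize_rel, ← Sum.comp_elim, HomClass.realize_term]
      exact f.map_rel R _
  | imp _ _ h1 h2 => simp only [BoundedFormula.realize_imp, h1, h2]

theorem exists_var_bound {k : ℕ} (θ : L.Formula (Fin k ⊕ ℕ)) :
    ∃ N : ℕ, ∀ (M : Type w) [L.Structure M] (a : Fin k → M) (c c' : ℕ → M),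
      (∀ m ≤ N, c m = c' m) → θ.Realize (Sum.elim a c) → θ.Realize (Sum.elim a c') := by
  classical
  refine ⟨(BoundedFormula.freeVarFinset θ).sup (Sum.elim (fun _ => 0) id), ?_⟩
  intro M _ a c c' h hc
  unfold Formula.Realize at *
  rw [← BoundedFormula.realize_restrictFreeVar (φ := θ) (f := Subtype.val)
    (v := Sum.elim a c) _ (fun _ => rfl)] at hc
  rwa [BoundedFormula.realize_restrictFreeVar (φ := θ) (f := Subtype.val)
    (v := Sum.elim a c) (Sum.elim a c')] at hc
  rintro ⟨i | m, hm⟩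
  · rfl
  · exact h m (Finset.le_sup (f := Sum.elim (fun _ => 0) id) hm)

theorem exists_prenex {k : ℕ} (θ : L.Formula (Fin k ⊕ ℕ)) :
    ∃ (n : ℕ) (ψ : L.BoundedFormula Empty (k + n)), (θ.IsQF → ψ.IsQF) ∧
      ∀ (M : Type w) [L.Structure M] (v : Empty → M) (a : Fin k → M),
        (exsFrom k ψ).Realize v a ↔ ∃ c : ℕ → M, θ.Realize (Sum.elim a c) := by
  obtain ⟨N, hN⟩ := exists_var_bound.{u, v, w} θ
  let g : Fin k ⊕ ℕ → Empty ⊕ Fin (k + (N + 1)) :=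
    Sum.elim (fun i => Sum.inr (Fin.castAdd _ i))
      (fun m => Sum.inr (Fin.natAdd k ⟨min m N, by omega⟩))
  have hg : ∀ (M : Type w) (v : Empty → M) (a : Fin k → M) (y : Fin (N + 1) → M),
      (Sum.elim v (Fin.append a y ∘ Fin.castAdd 0) ∘ g) =
        Sum.elim a (fun m => y ⟨min m N, by omega⟩) := by
    intro M v a y
    ext (i | m)
    · simp [g]
    · exact Fin.append_right a y ⟨min m N, by omega⟩
  let χ : L.BoundedFormula Empty (k + (N + 1)) := BoundedFormula.relabel g θ
  refine ⟨N + 1, χ, fun h => h.relabel g, ?_⟩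
  intro M _ v a
  rw [realize_exsFrom]
  have hr : ∀ y : Fin (N + 1) → M, χ.Realize v (Fin.append a y) ↔
      θ.Realize (Sum.elim a (fun m => y ⟨min m N, by omega⟩)) := by
    intro y
    have := BoundedFormula.realize_relabel (φ := θ) (g := g) (v := v)
      (xs := (show Fin (k + (N + 1)) → M from Fin.append a y))
    refine this.trans ?_
    have h2 := hg M v a y
    refine Iff.trans (iff_of_eq (congrArg (fun z => BoundedFormula.Realize θ z _) h2)) ?_
    unfold Formula.Realize
    exact iff_of_eq (congrArg _ (Subsingleton.elim _ _))
  constructor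
  · rintro ⟨y, hy⟩
    exact ⟨_, (hr y).1 hy⟩
  · rintro ⟨c, hc⟩
    refine ⟨fun i => c i, (hr _).2 (hN M a c _ ?_ hc)⟩
    intro m hm
    simp [hm]

/-- Conjunctions of `∀^k∃*` conditions. -/
theorem exists_conj {k : ℕ} (F : Finset (L.Formula (Fin k ⊕ ℕ)))
    (hF : ∀ θ ∈ F, θ.IsQF) :
    ∃ χ : L.Formula (Fin k ⊕ ℕ), χ.IsQF ∧ ∀ (M : Type w) [L.Structure M] [Nonempty M]
      (a : Fin k → M), (∃ c : ℕ → M, χ.Realize (Sum.elim a c)) ↔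
        ∀ θ ∈ F, ∃ c : ℕ → M, θ.Realize (Sum.elim a c) := by
  classical
  induction F using Finset.induction_on with
  | empty =>
    refine ⟨⊤, BoundedFormula.IsQF.top, fun M _ _ a => ?_⟩
    simp
  | insert θ F _ ih =>
    obtain ⟨χ, hχ, h⟩ := ih (fun θ' h' => hF θ' (Finset.mem_insert_of_mem h'))
    have hθ := hF θ (Finset.mem_insert_self _ _)
    refine ⟨Formula.relabel (Sum.map id (fun m => 2 * m)) θ ⊓
      Formula.relabel (Sum.map id (fun m => 2 * m + 1)) χ,
      (BoundedFormula.IsQF.relabel hθ _).inf (BoundedFormula.IsQF.relabel hχ _), ?_⟩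
    intro M _ _ a
    simp only [Finset.forall_mem_insert, ← h, Formula.realize_inf, Formula.realize_relabel,
      Sum.elim_comp_map, Function.comp_id]
    constructor
    · rintro ⟨c, h1, h2⟩
      exact ⟨⟨_, h1⟩, ⟨_, h2⟩⟩
    · rintro ⟨⟨c, h1⟩, ⟨d, h2⟩⟩
      refine ⟨fun m => if m % 2 = 0 then c (m / 2) else d (m / 2), ?_, ?_⟩
      · convert h1 using 2
        ext m
        simp
      · convert h2 using 2
        ext m
        have h3 : (2 * m + 1) % 2 = 1 := by omega
        have h4 : (2 * m + 1) / 2 = m := by omega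
        simp [h3, h4]

theorem exists_disj {α : Type*} (F : Finset (L.Formula α))
    (hF : ∀ θ ∈ F, θ.IsQF) :
    ∃ χ : L.Formula α, χ.IsQF ∧ ∀ (M : Type w) [L.Structure M]
      (a : α → M), χ.Realize a ↔ ∃ θ ∈ F, θ.Realize a := by
  classical
  induction F using Finset.induction_on with
  | empty =>
    refine ⟨⊥, BoundedFormula.isQF_bot, fun M _ a => ?_⟩
    simp
  | insert θ F _ ih =>
    obtain ⟨χ, hχ, h⟩ := ih (fun θ' h' => hF θ' (Finset.mem_insert_of_mem h'))
    have hθ := hF θ (Finset.mem_insert_self _ _)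
    refine ⟨θ ⊔ χ, hθ.sup hχ, ?_⟩
    intro M _ a
    simp only [Finset.exists_mem_insert, ← h, Formula.realize_sup]

theorem exists_inf {α : Type*} (F : Finset (L.Formula α))
    (hF : ∀ θ ∈ F, θ.IsQF) :
    ∃ χ : L.Formula α, χ.IsQF ∧ ∀ (M : Type w) [L.Structure M]
      (a : α → M), χ.Realize a ↔ ∀ θ ∈ F, θ.Realize a := by
  classical
  induction F using Finset.induction_on with
  | empty =>
    refine ⟨⊤, BoundedFormula.IsQF.top, fun M _ a => ?_⟩
    simp
  | insert θ F _ ih =>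
    obtain ⟨χ, hχ, h⟩ := ih (fun θ' h' => hF θ' (Finset.mem_insert_of_mem h'))
    have hθ := hF θ (Finset.mem_insert_self _ _)
    refine ⟨θ ⊓ χ, hθ.inf hχ, ?_⟩
    intro M _ a
    simp only [Finset.forall_mem_insert, ← h, Formula.realize_inf]

theorem realize_forallExists (k n : ℕ) (ψ : L.BoundedFormula Empty (k + n)) (M : Type w)
    [L.Structure M] : M ⊨ forallExistsSentence k n ψ ↔
      ∀ a : Fin k → M, (exsFrom k ψ).Realize (default : Empty → M) a := by
  exact BoundedFormula.realize_alls

theorem exists_countable_elementary [Countable L.Symbols] {k : ℕ} (M : Type w) [L.Structure M]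
    [Nonempty M] (b : Fin k → M) :
    ∃ S : L.ElementarySubstructure M, Countable S ∧ ∀ i, b i ∈ S := by
  by_cases hM : Countable M
  · exact ⟨⊤, inferInstance, fun i => trivial⟩
  · obtain ⟨S, hS, hc⟩ := L.exists_elementarySubstructure_card_eq (M := M) (Set.range b)
      Cardinal.aleph0.{0} le_rfl (by
        simp ) (by
        simp only [Cardinal.lift_aleph0]
        rw [Cardinal.lift_uzero]
        exact Cardinal.mk_le_aleph0_iff.2 inferInstance) (by
        rw [← Cardinal.mk_le_aleph0_iff, not_le] at hM
        simpa using hM.le)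
    refine ⟨S, ?_, fun i => hS ⟨i, rfl⟩⟩
    rw [← Cardinal.mk_le_aleph0_iff]
    simp at hc
    exact hc.le

/-- An existential condition on a `k`-tuple, as a formula. -/
theorem exists_ex_formula {k : ℕ} (θ : L.Formula (Fin k ⊕ ℕ)) :
    ∃ η : L.Formula (Fin k), ∀ (M : Type w) [L.Structure M] (a : Fin k → M),
        η.Realize a ↔ ∃ c : ℕ → M, θ.Realize (Sum.elim a c) := by
  obtain ⟨n, ψ, -, h⟩ := exists_prenex.{u, v, w} θ
  refine ⟨Formula.relabel (Sum.elim Empty.elim id) (exsFrom k ψ).toFormula, ?_⟩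
  intro M _ a
  rw [Formula.realize_relabel, BoundedFormula.realize_toFormula, ← h M (fun e => e.elim) a]
  apply iff_of_eq
  congr 1
  ext i
  exact i.elim

theorem realize_sentence_relabel {α : Type*} (σ : L.Sentence) (M : Type w) [L.Structure M]
    (a : α → M) : (Formula.relabel (Empty.elim : Empty → α) σ).Realize a ↔ M ⊨ σ := by
  rw [Formula.realize_relabel, Sentence.Realize]
  exact iff_of_eq (congrArg _ (Subsingleton.elim _ _))

theorem exists_model [Countable L.Symbols] (V : L.Theory) (φ : L.Sentence) {k : ℕ} (M : Type w)
    [L.Structure M]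
    (hΓ : ∀ θ : L.Formula (Fin k ⊕ ℕ), θ.IsQF →
      (∀ (N : Type w) [L.Structure N] [Nonempty N], N ⊨ V → N ⊨ φ → ∀ b : Fin k → N,
        ∃ c : ℕ → N, θ.Realize (Sum.elim b c)) →
      ∀ a : Fin k → M, ∃ c : ℕ → M, θ.Realize (Sum.elim a c))
    (a : Fin k → M) :
    ∃ (N : Type w) (_ : L.Structure N) (_ : Nonempty N) (b : Fin k → N),
      Countable N ∧ N ⊨ V ∧ N ⊨ φ ∧ ∀ θ : L.Formula (Fin k ⊕ ℕ), θ.IsQF →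
        (∃ c : ℕ → N, θ.Realize (Sum.elim b c)) → ∃ c : ℕ → M, θ.Realize (Sum.elim a c) := by
  classical
  choose E hE using exists_ex_formula.{u, v, w} (L := L) (k := k)
  let T : Set (L.Formula (Fin k ⊕ ℕ)) :=
    {θ | θ.IsQF ∧ ¬ ∃ c : ℕ → M, θ.Realize (Sum.elim a c)}
  let S1 : Set (L.Formula (Fin k)) := Set.image (Formula.relabel Empty.elim) (insert φ V)
  let S2 : Set (L.Formula (Fin k)) := Set.image (fun θ => (E θ).not) T
  obtain ⟨N, i1, i2, b, hb⟩ := compactness_countable.{u, v, w} (S1 ∪ S2) (Set.to_countable _) (by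
    intro F hF
    obtain ⟨s, hsT, hs⟩ := (Finset.subset_set_image_iff (s := T)
      (t := F.filter (· ∈ S2)) (f := fun θ => (E θ).not)).1 (by
        intro y hy
        exact (Finset.mem_filter.1 hy).2)
    obtain ⟨χ, hχ, hχr⟩ := exists_disj.{u, v, w} s (fun θ hθ => (hsT hθ).1)
    by_contra hcon
    have hMχ := hΓ χ hχ (by
      intro N _ _ hV hφ b
      by_contra hno
      refine hcon ⟨N, inferInstance, inferInstance, b, ?_⟩
      intro η hη
      by_cases h2 : η ∈ S2
      · have h3 : η ∈ F.filter (· ∈ S2) := Finset.mem_filter.2 ⟨hη, h2⟩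
        rw [← hs, Finset.mem_image] at h3
        obtain ⟨θ, hθ, rfl⟩ := h3
        rw [Formula.realize_not, hE]
        rintro ⟨c, hc⟩
        exact hno ⟨c, (hχr _ _).2 ⟨θ, hθ, hc⟩⟩
      · rcases hF hη with ⟨σ, hσ, rfl⟩ | h
        · rw [realize_sentence_relabel]
          rcases hσ with rfl | hσ
          · exact hφ
          · exact hV.realize_of_mem σ hσ
        · exact absurd h h2) a
    obtain ⟨c, hc⟩ := hMχ
    obtain ⟨θ, hθ, hc'⟩ := (hχr _ _).1 hc
    exact (hsT hθ).2 ⟨c, hc'⟩)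
  have hV : N ⊨ V := ⟨fun σ hσ => (realize_sentence_relabel σ N b).1
    (hb _ (Or.inl ⟨σ, Or.inr hσ, rfl⟩))⟩
  have hφ : N ⊨ φ := (realize_sentence_relabel φ N b).1 (hb _ (Or.inl ⟨φ, Or.inl rfl, rfl⟩))
  obtain ⟨S, hS, hbS⟩ := exists_countable_elementary (L := L) N b
  refine ⟨S, inferInstance, (S.elementarilyEquivalent).nonempty_iff.2 i2,
    fun i => ⟨b i, hbS i⟩, hS, (S.theory_model_iff V).2 hV, (S.realize_sentence φ).2 hφ, ?_⟩
  rintro θ hθ ⟨c, hc⟩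
  by_contra hno
  have := hb _ (Or.inr ⟨θ, ⟨hθ, hno⟩, rfl⟩)
  rw [Formula.realize_not, hE] at this
  refine this ⟨fun m => c m, ?_⟩
  have h2 := S.subtype.map_formula θ (Sum.elim (fun i => ⟨b i, hbS i⟩) c)
  rw [Sum.comp_elim] at h2
  exact h2.2 hc

/-- If `d` satisfies all quantifier-free formulas that hold of the enumeration `c` of `N`, then
`c m ↦ d m` is an embedding. -/
theorem exists_embedding {k : ℕ} {N P : Type*} [L.Structure N] [L.Structure P]
    (b : Fin k → N) (a : Fin k → P) (c : ℕ → N) (d : ℕ → P) (hc : Function.Surjective c)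
    (h : ∀ θ : L.Formula (Fin k ⊕ ℕ), θ.IsQF → θ.Realize (Sum.elim b c) →
      θ.Realize (Sum.elim a d)) :
    ∃ f : N ↪[L] P, ∀ i, f (b i) = a i := by
  have hiff : ∀ θ : L.Formula (Fin k ⊕ ℕ), θ.IsQF → (θ.Realize (Sum.elim a d) ↔
      θ.Realize (Sum.elim b c)) := by
    intro θ hθ
    refine ⟨fun h1 => ?_, h θ hθ⟩
    by_contra h2
    have h3 := h θ.not hθ.not (Formula.realize_not.2 h2)
    exact Formula.realize_not.1 h3 h1
  have heq : ∀ t₁ t₂ : L.Term (Fin k ⊕ ℕ), t₁.realize (Sum.elim a d) = t₂.realize (Sum.elim a d) ↔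
      t₁.realize (Sum.elim b c) = t₂.realize (Sum.elim b c) := by
    intro t₁ t₂
    have := hiff (t₁.equal t₂) (BoundedFormula.IsAtomic.equal _ _).isQF
    simpa only [Formula.realize_equal] using this
  choose s hs using hc
  have hds : ∀ m, d (s (c m)) = d m := by
    intro m
    have := heq (Term.var (Sum.inr (s (c m)))) (Term.var (Sum.inr m))
    simp only [Term.realize_var, Sum.elim_inr] at this
    exact this.2 (hs _)
  refine ⟨⟨⟨fun x => d (s x), ?_⟩, ?_, ?_⟩, ?_⟩
  · intro x y hxy
    have := heq (Term.var (Sum.inr (s x))) (Term.var (Sum.inr (s y)))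
    simp only [Term.realize_var, Sum.elim_inr, hs] at this
    exact this.1 hxy
  · intro n f x
    have := heq (Term.var (Sum.inr (s (Structure.funMap f x))))
      (Term.func f (fun i => Term.var (Sum.inr (s (x i)))))
    simp only [Term.realize_var, Term.realize_func, Sum.elim_inr, hs] at this
    simpa [Function.comp_def] using this
  · intro n r x
    have := hiff (r.formula (fun i => Term.var (Sum.inr (s (x i)))))
      (BoundedFormula.IsAtomic.rel _ _).isQF
    simp only [Formula.realize_rel, Term.realize_var, Sum.elim_inr, hs] at this
    exact this
  · intro i
    have := heq (Term.var (Sum.inr (s (b i)))) (Term.var (Sum.inl i))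
    simp only [Term.realize_var, Sum.elim_inr, Sum.elim_inl, hs] at this
    exact this.2 trivial

open Filter in
theorem models_of_consequences [Countable L.Symbols] (V : L.Theory) (φ : L.Sentence) (k : ℕ)
    (hk : KExtensionClosed.{u, v, w} V k φ) (M : Type w) [L.Structure M] [Nonempty M]
    (hV : M ⊨ V)
    (hΓ : ∀ θ : L.Formula (Fin k ⊕ ℕ), θ.IsQF →
      (∀ (N : Type w) [L.Structure N] [Nonempty N], N ⊨ V → N ⊨ φ → ∀ b : Fin k → N,
        ∃ c : ℕ → N, θ.Realize (Sum.elim b c)) →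
      ∀ a : Fin k → M, ∃ c : ℕ → M, θ.Realize (Sum.elim a c)) : M ⊨ φ := by
  let P : Type w := ((hyperfilter ℕ : Ultrafilter ℕ) : Filter ℕ).Product (fun _ => M)
  let : L.Structure P := Ultraproduct.structure
  have : Nonempty P := Ultraproduct.Product.instNonempty
  have hP : ∀ σ : L.Sentence, P ⊨ σ ↔ M ⊨ σ := by
    intro σ
    refine (Ultraproduct.sentence_realize (u := hyperfilter ℕ) (M := fun _ : ℕ => M) σ).trans ?_
    simp
  have hPΓ : ∀ θ : L.Formula (Fin k ⊕ ℕ), θ.IsQF →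
      (∀ (N : Type w) [L.Structure N] [Nonempty N], N ⊨ V → N ⊨ φ → ∀ b : Fin k → N,
        ∃ c : ℕ → N, θ.Realize (Sum.elim b c)) →
      ∀ a : Fin k → P, ∃ c : ℕ → P, θ.Realize (Sum.elim a c) := by
    intro θ hθ h
    obtain ⟨n, ψ, -, hψ⟩ := exists_prenex.{u, v, w} θ
    have h1 : M ⊨ forallExistsSentence k n ψ := by
      rw [realize_forallExists]
      intro a
      rw [hψ]
      exact hΓ θ hθ h a
    have h2 := (hP _).2 h1
    rw [realize_forallExists] at h2
    intro a
    exact (hψ P _ a).1 (h2 a)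
  have hPV : P ⊨ V := ⟨fun σ hσ => (hP σ).2 (hV.realize_of_mem σ hσ)⟩
  rw [← hP]
  have hsub : ∀ a : Fin k → P, ∃ N : L.Substructure P, (N : Set P).Nonempty ∧
      ((N : Type w) ⊨ V ∧ (N : Type w) ⊨ φ) ∧ ∀ i, a i ∈ N := by
    intro a
    obtain ⟨N, i1, i2, b, hcount, hNV, hNφ, hN⟩ := exists_model V φ P hPΓ a
    obtain ⟨c, hc⟩ := exists_surjective_nat N
    obtain ⟨d, hd⟩ := saturation M a
      {θ : L.Formula (Fin k ⊕ ℕ) | θ.IsQF ∧ θ.Realize (Sum.elim b c)} (Set.to_countable _) (by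
        intro F hF
        obtain ⟨χ, hχ, hχr⟩ := exists_inf.{u, v, w} F (fun θ hθ => (hF hθ).1)
        obtain ⟨d, hd⟩ := hN χ hχ ⟨c, (hχr _ _).2 (fun θ hθ => (hF hθ).2)⟩
        exact ⟨d, (hχr P _).1 hd⟩)
    obtain ⟨f, hf⟩ := exists_embedding (P := P) b a c d hc (fun θ h1 h2 => hd θ ⟨h1, h2⟩)
    refine ⟨f.toHom.range, ⟨f (Classical.arbitrary N), Hom.mem_range_self f.toHom _⟩, ⟨?_, ?_⟩, ?_⟩
    · exact StrongHomClass.theory_model f.equivRange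
    · exact (StrongHomClass.realize_sentence f.equivRange φ).1 hNφ
    · intro i
      rw [← hf i]
      exact Hom.mem_range_self f.toHom _
  refine hk P hPV {N | (N : Set P).Nonempty ∧ (N : Type w) ⊨ V ∧ (N : Type w) ⊨ φ}
    ⟨?_, fun N hN => hN.1, ?_⟩ (fun N hN => hN.2)
  · obtain ⟨N, h1, h2, -⟩ := hsub (fun _ => Classical.arbitrary P)
    exact ⟨N, h1, h2⟩
  · intro C hC
    obtain ⟨a, ha⟩ : ∃ a : Fin k → P, ∀ x ∈ C, ∃ i, a i = x := by
      refine ⟨fun i => if h : (i : ℕ) < C.card then (C.equivFin.symm ⟨i, h⟩ : P)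
        else Classical.arbitrary P, fun x hx => ?_⟩
      refine ⟨⟨C.equivFin ⟨x, hx⟩, lt_of_lt_of_le (Fin.isLt _) hC⟩, ?_⟩
      simp
    obtain ⟨N, h1, h2, h3⟩ := hsub a
    refine ⟨N, ⟨h1, h2⟩, fun x hx => ?_⟩
    obtain ⟨i, rfl⟩ := ha x hx
    exact h3 i

theorem glt_forward [Countable L.Symbols] (V : L.Theory) (φ : L.Sentence) (k : ℕ)
    (hk : KExtensionClosed.{u, v, w} V k φ) :
      ∃ (n : ℕ) (ψ : L.BoundedFormula Empty (k + n)), ψ.IsQF ∧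
        ∀ (M : Type w) [L.Structure M] [Nonempty M], M ⊨ V →
          (M ⊨ φ ↔ M ⊨ forallExistsSentence k n ψ) := by
  classical
  choose n ψ hQF hψ using exists_prenex.{u, v, w} (L := L) (k := k)
  let G : Set (L.Formula (Fin k ⊕ ℕ)) := {θ | θ.IsQF ∧
    ∀ (N : Type w) [L.Structure N] [Nonempty N], N ⊨ V → N ⊨ φ → ∀ b : Fin k → N,
        ∃ c : ℕ → N, θ.Realize (Sum.elim b c)}
  let g : L.Formula (Fin k ⊕ ℕ) → L.Formula Empty := fun θ => forallExistsSentence k _ (ψ θ)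
  have hg : ∀ θ (M : Type w) [L.Structure M], M ⊨ forallExistsSentence k _ (ψ θ) ↔
      ∀ a : Fin k → M, ∃ c : ℕ → M, θ.Realize (Sum.elim a c) := by
    intro θ M _
    rw [realize_forallExists]
    exact forall_congr' fun a => hψ θ M _ a
  by_contra hcon
  have hfin : ∀ F : Finset (L.Formula Empty),
      (F : Set (L.Formula Empty)) ⊆ (insert (Formula.not φ) V) ∪ Set.image g G →
      ∃ (M : Type w) (_ : L.Structure M) (_ : Nonempty M) (x : Empty → M),
        ∀ θ ∈ F, θ.Realize x := by
    intro F hF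
    obtain ⟨s, hsG, hs⟩ := (Finset.subset_set_image_iff (s := G)
      (t := F.filter (· ∈ Set.image g G)) (f := g)).1 (by
        intro y hy
        exact (Finset.mem_filter.1 hy).2)
    obtain ⟨χ, hχ, hχr⟩ := exists_conj.{u, v, w} s (fun θ hθ => (hsG hθ).1)
    by_contra hno
    refine hcon ⟨_, ψ χ, hQF χ hχ, ?_⟩
    intro M _ _ hV
    rw [hg]
    constructor
    · intro hφ a
      rw [hχr]
      intro θ hθ
      exact (hsG hθ).2 M hV hφ a
    · intro h
      by_contra hφ
      refine hno ⟨M, inferInstance, inferInstance, default, ?_⟩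
      intro η hη
      by_cases h2 : η ∈ Set.image g G
      · have h3 : η ∈ F.filter (· ∈ Set.image g G) := Finset.mem_filter.2 ⟨hη, h2⟩
        rw [← hs, Finset.mem_image] at h3
        obtain ⟨θ, hθ, rfl⟩ := h3
        exact (hg θ M).2 (fun a => (hχr M a).1 (h a) θ hθ)
      · rcases hF hη with (rfl | hσ) | h
        · exact Formula.realize_not.2 hφ
        · exact hV.realize_of_mem η hσ
        · exact absurd h h2
  obtain ⟨M, i1, i2, x, hx⟩ := compactness_countable.{u, v, w} _ (Set.to_countable _) hfin
  obtain rfl : x = default := Subsingleton.elim _ _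
  have hV : M ⊨ V := ⟨fun σ hσ => hx σ (Or.inl (Or.inr hσ))⟩
  have hφ := hx _ (Or.inl (Or.inl rfl))
  refine Formula.realize_not.1 hφ (models_of_consequences V φ k hk M hV ?_)
  intro θ hθ h
  exact (hg θ M).1 (hx _ (Or.inr ⟨θ, ⟨hθ, h⟩, rfl⟩))

theorem glt_backward (V : L.Theory) (φ : L.Sentence) (k n : ℕ)
    (ψ : L.BoundedFormula Empty (k + n)) (hψ : ψ.IsQF)
    (h : ∀ (M : Type w) [L.Structure M] [Nonempty M], M ⊨ V →
          (M ⊨ φ ↔ M ⊨ forallExistsSentence k n ψ)) :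
    KExtensionClosed.{u, v, w} V k φ := by
  classical
  intro M _ _ hV R hR hN
  rw [h M hV, realize_forallExists]
  intro a
  obtain ⟨N, hNR, hsub⟩ := hR.2.2 (Finset.univ.image a)
    (Finset.card_image_le.trans (by simp))
  have : Nonempty N := (hR.2.1 N hNR).to_subtype
  obtain ⟨hNV, hNφ⟩ := hN N hNR
  rw [h N hNV, realize_forallExists] at hNφ
  have ha : ∀ i, a i ∈ N := fun i => hsub (by simp)
  obtain ⟨y, hy⟩ := (realize_exsFrom k ψ _ _).1 (hNφ (fun i => ⟨a i, ha i⟩))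
  rw [realize_exsFrom]
  refine ⟨fun i => y i, ?_⟩
  have := (isQF_realize_embedding hψ N.subtype default _).2 hy
  convert! this using 1
  ext i
  refine Fin.addCases (fun i => ?_) (fun i => ?_) i <;> simp

/-- **Generalized Łoś–Tarski theorem `GLT(k)`, extension-closed direction** (for sentences):
over arbitrary structures, a sentence `φ` is `k`-extension closed modulo a theory `V` iff it is
equivalent modulo `V` to a `∀^k∃*` sentence `∀x₁…∀x_k ∃y₁…∃y_n ψ` with `ψ` quantifier-free. -/
theorem glt_k_extension_closed (hfin : Finite L.Symbols) (V : L.Theory) (φ : L.Sentence)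
    (k : ℕ) :
    KExtensionClosed.{u, v, w} V k φ ↔
      ∃ (n : ℕ) (ψ : L.BoundedFormula Empty (k + n)), ψ.IsQF ∧
        ∀ (M : Type w) [L.Structure M] [Nonempty M], M ⊨ V →
          (M ⊨ φ ↔ M ⊨ forallExistsSentence k n ψ) := by
  have := hfin
  exact ⟨glt_forward V φ k, fun ⟨n, ψ, hψ, h⟩ => glt_backward V φ k n ψ hψ h⟩

end GLTPaper
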